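/- Let d ≥ 2. For all n, m ∈ S^{d-1}, the normalized Haar measure of the set of special rotations under which the signs of the last coordinates of Rn and Rm disagree equals arccos⟪n,m⟫/π; that is, μ({ R ∈ SO(d) : ⟪Rn, e_d⟫·⟪Rm, e_d⟫ < 0 }) = arccos⟪n, m⟫ / π. -/

import Mathlib

noncomputable section
open MeasureTheory Real Filter
open scoped ENNReal RealInnerProductSpace

instance {m n : Type*} : MeasurableSpace (Matrix m n ℝ) := MeasurableSpace.pi

/-- The special orthogonal group `SO(d)` as matrices. -/
abbrev SOd (d : ℕ) := Matrix.specialOrthogonalGroup (Fin d) ℝ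

/-- The last coordinate `⟪x, e_d⟫` of a vector `x ∈ ℝ^d`. -/
def lastCoord {d : ℕ} (x : EuclideanSpace ℝ (Fin d)) : ℝ :=
  if h : 0 < d then x ⟨d - 1, Nat.sub_lt h Nat.one_pos⟩ else 0

/-- Action of a matrix on `ℝ^d` (Euclidean space) by matrix-vector multiplication. -/
def rotAct {d : ℕ} (R : Matrix (Fin d) (Fin d) ℝ) (x : EuclideanSpace ℝ (Fin d)) :
    EuclideanSpace ℝ (Fin d) :=
  (EuclideanSpace.equiv (Fin d) ℝ).symm (R.mulVec (EuclideanSpace.equiv (Fin d) ℝ x))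

/-- Action of `R ∈ SO(d)` on `ℝ^d`. -/
def rot {d : ℕ} (R : SOd d) (x : EuclideanSpace ℝ (Fin d)) : EuclideanSpace ℝ (Fin d) :=
  rotAct (R : Matrix (Fin d) (Fin d) ℝ) x

/-!
For fixed `e`, right invariance of `μ` makes the law of `w = R⁻¹ e` rotation invariant, and the
signs of `⟪R x, e⟫ = ⟪x, w⟫` and `⟪R y, e⟫ = ⟪y, w⟫` are what matters. Rotating the pair `(x, y)`
along the great circle through it does not change the probability that they differ, so this
probability may be averaged over the great circle. By Fubini one can average for fixed `w` instead:
almost surely `w` is not orthogonal to the circle, the inner product with `w` is then a shifted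
cosine along it, and two points at distance `θ` see different signs of a cosine for a proportion
`θ / π` of the positions.

That `w` is almost surely not orthogonal to a given `x ≠ 0` is Fubini again: the pairs `(w, z)`
with `⟪w, z⟫ = 0` are null for the product with Lebesgue measure, so *some* hyperplane is null, and
rotations carry it to every other one.
-/

open InnerProductGeometry

section GreatCircle

variable {E : Type*} [NormedAddCommGroup E] [InnerProductSpace ℝ E] {u v x y : E}

/-- The parametrisation `t ↦ cos t • u + sin t • v` of the great circle through `u` and `v`,
meant for orthonormal `u` and `v`. It replaces coordinates in the plane spanned by two vectors. -/
def greatCircle (u v : E) (t : ℝ) : E :=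
  cos t • u + sin t • v

@[simp]
theorem greatCircle_zero (u v : E) : greatCircle u v 0 = u := by
  simp [greatCircle]

@[fun_prop]
theorem continuous_greatCircle (u v : E) : Continuous (greatCircle u v) := by
  unfold greatCircle
  fun_prop

theorem inner_greatCircle (hu : ‖u‖ = 1) (hv : ‖v‖ = 1) (huv : ⟪u, v⟫ = 0) (s t : ℝ) :
    ⟪greatCircle u v s, greatCircle u v t⟫ = cos (s - t) := by
  have hvu : ⟪v, u⟫ = 0 := by rw [real_inner_comm, huv]
  simp only [greatCircle, inner_add_left, inner_add_right, real_inner_smul_left,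
    real_inner_smul_right, real_inner_self_eq_norm_sq, hu, hv, huv, hvu, cos_sub]
  ring

theorem norm_greatCircle (hu : ‖u‖ = 1) (hv : ‖v‖ = 1) (huv : ⟪u, v⟫ = 0) (t : ℝ) :
    ‖greatCircle u v t‖ = 1 := by
  rw [← sq_eq_sq₀ (norm_nonneg _) zero_le_one, ← real_inner_self_eq_norm_sq,
    inner_greatCircle hu hv huv]
  simp

theorem exists_unit_orthogonal_norm_smul_eq (hE : 1 < Module.finrank ℝ E) {z : E}
    (hxz : ⟪x, z⟫ = 0) : ∃ v, ‖v‖ = 1 ∧ ⟪x, v⟫ = 0 ∧ ‖z‖ • v = z := by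
  rcases eq_or_ne z 0 with rfl | hz
  · have hne : (ℝ ∙ x)ᗮ ≠ ⊥ := by
      intro h
      have hle : Module.finrank ℝ (ℝ ∙ x) ≤ 1 := by simpa using finrank_span_le_card (R := ℝ) {x}
      rw [Submodule.orthogonal_eq_bot_iff.1 h, finrank_top] at hle
      exact hle.not_gt hE
    obtain ⟨w, hxw, hw⟩ := Submodule.exists_mem_ne_zero_of_ne_bot hne
    rw [Submodule.mem_orthogonal_singleton_iff_inner_right] at hxw
    exact ⟨‖w‖⁻¹ • w, norm_smul_inv_norm hw, by simp [real_inner_smul_right, hxw], by simp⟩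
  · exact ⟨‖z‖⁻¹ • z, norm_smul_inv_norm hz, by simp [real_inner_smul_right, hxz],
      smul_inv_smul₀ (norm_ne_zero_iff.2 hz) z⟩

theorem exists_greatCircle_angle_eq (hE : 1 < Module.finrank ℝ E) (hx : ‖x‖ = 1) (hy : ‖y‖ = 1) :
    ∃ v, ‖v‖ = 1 ∧ ⟪x, v⟫ = 0 ∧ greatCircle x v (angle x y) = y := by
  have hxy : ⟪x, y⟫ = cos (angle x y) := by simp [cos_angle, hx, hy]
  have hyx : ⟪y, x⟫ = cos (angle x y) := by rw [real_inner_comm, hxy]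
  have hperp : ⟪x, y - cos (angle x y) • x⟫ = 0 := by
    simp [inner_sub_right, real_inner_smul_right, hx, hxy]
  have hnorm : ‖y - cos (angle x y) • x‖ = sin (angle x y) := by
    rw [← sq_eq_sq₀ (norm_nonneg _) (sin_angle_nonneg x y), sin_sq, norm_sub_sq_real, norm_smul,
      real_inner_smul_right, hyx, mul_pow, hx, hy, norm_eq_abs, sq_abs]
    ring
  obtain ⟨v, hv, hxv, hvy⟩ := exists_unit_orthogonal_norm_smul_eq hE hperp
  refine ⟨v, hv, hxv, ?_⟩
  rw [greatCircle, ← hnorm, hvy, add_sub_cancel]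

theorem exists_pos_forall_inner_greatCircle_eq {w : E} (hw : ⟪w, u⟫ ≠ 0) (v : E) :
    ∃ r > 0, ∃ φ, ∀ t, ⟪w, greatCircle u v t⟫ = r * cos (t - φ) := by
  let z : ℂ := ⟨⟪w, u⟫, ⟪w, v⟫⟩
  have hz : z ≠ 0 := fun h => hw (congrArg Complex.re h)
  have hre : ⟪w, u⟫ = ‖z‖ * cos z.arg := (Complex.norm_mul_cos_arg z).symm
  have him : ⟪w, v⟫ = ‖z‖ * sin z.arg := (Complex.norm_mul_sin_arg z).symm
  refine ⟨‖z‖, norm_pos_iff.2 hz, z.arg, fun t => ?_⟩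
  rw [greatCircle, inner_add_right, real_inner_smul_right, real_inner_smul_right, hre, him, cos_sub]
  ring

theorem reflection_greatCircle (hu : ‖u‖ = 1) (hv : ‖v‖ = 1) (huv : ⟪u, v⟫ = 0) (s t : ℝ) :
    (ℝ ∙ greatCircle u v s)ᗮ.reflection (greatCircle u v t) = -greatCircle u v (2 * s - t) := by
  have hcos : 2 * cos s * cos (s - t) = cos t + cos (2 * s - t) := by
    rw [two_mul_cos_mul_cos]
    ring_nf
  have hsin : 2 * sin s * cos (s - t) = sin t + sin (2 * s - t) := by
    rw [two_mul_sin_mul_cos]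
    ring_nf
  rw [Submodule.reflection_orthogonal_apply, Submodule.reflection_singleton_apply,
    norm_greatCircle hu hv huv, inner_greatCircle hu hv huv]
  simp only [greatCircle]
  linear_combination (norm := module) -hcos • u - hsin • v

theorem det_reflection_orthogonal_singleton [FiniteDimensional ℝ E] (hx : x ≠ 0) :
    LinearMap.det (ℝ ∙ x)ᗮ.reflection.toLinearMap = -1 := by
  rw [Submodule.det_reflection, Submodule.orthogonal_orthogonal, finrank_span_singleton hx, pow_one]

theorem exists_rotation_greatCircle [FiniteDimensional ℝ E] (hu : ‖u‖ = 1) (hv : ‖v‖ = 1)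
    (huv : ⟪u, v⟫ = 0) (t : ℝ) :
    ∃ R : E ≃ₗᵢ[ℝ] E, LinearMap.det R.toLinearMap = 1 ∧
      ∀ s, R (greatCircle u v s) = greatCircle u v (s + t) := by
  have hne (s : ℝ) : greatCircle u v s ≠ 0 := by
    rw [← norm_ne_zero_iff, norm_greatCircle hu hv huv]
    exact one_ne_zero
  -- The reflections in the points `0` and `t / 2` of the circle compose to the rotation by `t`.
  refine ⟨(ℝ ∙ greatCircle u v 0)ᗮ.reflection.trans (ℝ ∙ greatCircle u v (t / 2))ᗮ.reflection,
    ?_, fun s => ?_⟩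
  · refine (LinearMap.det_comp (ℝ ∙ greatCircle u v (t / 2))ᗮ.reflection.toLinearMap
      (ℝ ∙ greatCircle u v 0)ᗮ.reflection.toLinearMap).trans ?_
    rw [det_reflection_orthogonal_singleton (hne _), det_reflection_orthogonal_singleton (hne _),
      neg_mul_neg, one_mul]
  · rw [LinearIsometryEquiv.trans_apply, reflection_greatCircle hu hv huv, map_neg,
      reflection_greatCircle hu hv huv, neg_neg]
    ring_nf

theorem exists_rotation_apply_eq [FiniteDimensional ℝ E] (hE : 1 < Module.finrank ℝ E)
    (hxy : ‖x‖ = ‖y‖) : ∃ R : E ≃ₗᵢ[ℝ] E, LinearMap.det R.toLinearMap = 1 ∧ R x = y := by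
  rcases eq_or_ne x 0 with rfl | hx
  · exact ⟨.refl ℝ E, LinearMap.det_id, by simpa [eq_comm] using hxy⟩
  have hy : y ≠ 0 := norm_ne_zero_iff.1 (hxy ▸ norm_ne_zero_iff.2 hx)
  have hx_unit : ‖‖x‖⁻¹ • x‖ = 1 := norm_smul_inv_norm hx
  have hy_unit : ‖‖y‖⁻¹ • y‖ = 1 := norm_smul_inv_norm hy
  obtain ⟨v, hv, hxv, hvy⟩ := exists_greatCircle_angle_eq hE hx_unit hy_unit
  obtain ⟨R, hdet, hR⟩ := exists_rotation_greatCircle hx_unit hv hxv _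
  refine ⟨R, hdet, smul_right_injective E (inv_ne_zero (norm_ne_zero_iff.2 hx)) ?_⟩
  have hR₀ := hR 0
  rw [greatCircle_zero, zero_add, hvy, map_smul] at hR₀
  simpa [hxy] using hR₀

end GreatCircle

section Cosine

theorem cos_mul_cos_add_neg_iff {θ t : ℝ} (hθ : 0 ≤ θ) (hθπ : θ ≤ π)
    (ht : t ∈ Set.Ioc (-(π / 2)) (π / 2)) :
    cos t * cos (t + θ) < 0 ↔ t ∈ Set.Ioo (π / 2 - θ) (π / 2) := by
  rcases ht.2.eq_or_lt with rfl | hlt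
  · simp
  have hcos : 0 < cos t := cos_pos_of_mem_Ioo ⟨ht.1, hlt⟩
  rw [← smul_eq_mul, smul_neg_iff_of_pos_left hcos]
  constructor
  · intro hneg
    refine ⟨?_, hlt⟩
    by_contra! hle
    exact hneg.not_ge (cos_nonneg_of_mem_Icc ⟨by linarith [ht.1], by linarith⟩)
  · rintro ⟨hgt, -⟩
    exact cos_neg_of_pi_div_two_lt_of_lt (by linarith) (by linarith)

theorem volume_setOf_cos_mul_cos_add_neg_inter_Ioc {θ : ℝ} (hθ : 0 ≤ θ) (hθπ : θ ≤ π) (a : ℝ) :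
    volume ({t | cos t * cos (t + θ) < 0} ∩ Set.Ioc a (a + π)) = ENNReal.ofReal θ := by
  set S := {t | cos t * cos (t + θ) < 0}
  have hS : MeasurableSet S := (isOpen_lt (by fun_prop) continuous_const).measurableSet
  have hperiod (g : AddSubgroup.zmultiples π) : (g +ᵥ ·) ⁻¹' S = S := by
    obtain ⟨_, k, rfl⟩ := g
    ext t
    have hk : t + k * π + θ = t + θ + k * π := by ring
    have hsq : ((-1 : ℝ) ^ k) * (-1) ^ k = 1 := by rw [← mul_zpow]; norm_num
    simp [S, AddSubgroup.vadd_def, add_comm _ t, hk, cos_add_int_mul_pi, mul_mul_mul_comm, hsq]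
  calc volume (S ∩ Set.Ioc a (a + π))
      = volume (S ∩ Set.Ioc (-(π / 2)) (-(π / 2) + π)) :=
        (isAddFundamentalDomain_Ioc pi_pos a).measure_set_eq
          (isAddFundamentalDomain_Ioc pi_pos _) hS hperiod
    _ = volume (Set.Ioo (π / 2 - θ) (π / 2)) := by
        congr 1
        rw [show -(π / 2) + π = π / 2 by ring]
        ext t
        exact ⟨fun ⟨h, ht⟩ => (cos_mul_cos_add_neg_iff hθ hθπ ht).1 h, fun h =>
          have ht : t ∈ Set.Ioc (-(π / 2)) (π / 2) := ⟨by linarith [h.1], h.2.le⟩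
          ⟨(cos_mul_cos_add_neg_iff hθ hθπ ht).2 h, ht⟩⟩
    _ = ENNReal.ofReal θ := by simp

end Cosine

section RotationInvariant

variable {E : Type*} [NormedAddCommGroup E] [InnerProductSpace ℝ E] [MeasurableSpace E]
  {ν : Measure E} {x y : E}

/-- Invariance of a measure under all rotations about the origin, encoded as the linear isometries
of determinant one. It abstracts the law of a uniformly random direction. In infinite dimension
`LinearMap.det` is constantly `1`, so there it asks for invariance under all linear isometries. -/
def IsRotationInvariant (ν : Measure E) : Prop :=
  ∀ R : E ≃ₗᵢ[ℝ] E, LinearMap.det R.toLinearMap = 1 → ν.map R = ν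

theorem IsRotationInvariant.measure_preimage [BorelSpace E] (hν : IsRotationInvariant ν)
    {R : E ≃ₗᵢ[ℝ] E} (hR : LinearMap.det R.toLinearMap = 1) {s : Set E} (hs : MeasurableSet s) :
    ν (R ⁻¹' s) = ν s := by
  rw [← Measure.map_apply R.continuous.measurable hs, hν R hR]

variable [BorelSpace E] [FiniteDimensional ℝ E]

theorem addHaar_setOf_inner_eq_zero (μ : Measure E) [μ.IsAddHaarMeasure] (hx : x ≠ 0) :
    μ {z | ⟪x, z⟫ = 0} = 0 := by
  have hne : (ℝ ∙ x)ᗮ ≠ ⊤ := by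
    rwa [Ne, Submodule.orthogonal_eq_top_iff, Submodule.span_singleton_eq_bot]
  convert Measure.addHaar_submodule μ _ hne
  ext z
  simp [Submodule.mem_orthogonal_singleton_iff_inner_right]

theorem exists_ne_zero_measure_setOf_inner_eq_zero [Nontrivial E] [SFinite ν] (hν₀ : ν {0} = 0) :
    ∃ z ≠ 0, ν {w | ⟪w, z⟫ = 0} = 0 := by
  have hmeas : MeasurableSet {p : E × E | ⟪p.1, p.2⟫ ≠ 0} :=
    (isOpen_ne_fun (by fun_prop) continuous_const).measurableSet
  have hae : ∀ᵐ w ∂ν, ∀ᵐ z : E, ⟪w, z⟫ ≠ 0 := by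
    have hν₀' : ∀ᵐ w ∂ν, w ≠ 0 := by simpa [ae_iff] using hν₀
    filter_upwards [hν₀'] with w hw
    simpa [ae_iff] using addHaar_setOf_inner_eq_zero volume hw
  obtain ⟨z, hz, hz₀⟩ :=
    (((Measure.ae_ae_comm hmeas).1 hae).and (Measure.ae_ne volume (0 : E))).exists
  exact ⟨z, hz₀, by simpa [ae_iff] using hz⟩

theorem IsRotationInvariant.measure_setOf_inner_eq_zero [SFinite ν] (hν : IsRotationInvariant ν)
    (hE : 1 < Module.finrank ℝ E) (hν₀ : ν {0} = 0) (hx : x ≠ 0) : ν {w | ⟪w, x⟫ = 0} = 0 := by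
  have : Nontrivial E := Module.nontrivial_of_finrank_pos (zero_lt_one.trans hE)
  obtain ⟨z, hz, hνz⟩ := exists_ne_zero_measure_setOf_inner_eq_zero hν₀
  have hc : ‖x‖ / ‖z‖ ≠ 0 := div_ne_zero (norm_ne_zero_iff.2 hx) (norm_ne_zero_iff.2 hz)
  obtain ⟨R, hdet, hR⟩ := exists_rotation_apply_eq hE (x := x) (y := (‖x‖ / ‖z‖) • z)
    (by simp [norm_smul, hz])
  have hpre : R ⁻¹' {w | ⟪w, z⟫ = 0} = {w | ⟪w, x⟫ = 0} := by
    ext w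
    rw [Set.mem_preimage, Set.mem_ofPred_eq, Set.mem_ofPred_eq, ← R.inner_map_map w x, hR,
      real_inner_smul_right, mul_eq_zero_iff_left hc]
  rw [← hpre, hν.measure_preimage hdet
    (isClosed_eq (by fun_prop) continuous_const).measurableSet, hνz]

end RotationInvariant

section SignDisagreement

theorem mul_mul_mul_neg_iff_of_pos {α : Type*} [CommRing α] [LinearOrder α] [IsStrictOrderedRing α]
    {a b c d : α} (ha : 0 < a) (hb : 0 < b) : a * c * (b * d) < 0 ↔ c * d < 0 := by
  rw [mul_mul_mul_comm, ← smul_eq_mul (a * b), smul_neg_iff_of_pos_left (mul_pos ha hb)]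

variable {E : Type*} [NormedAddCommGroup E] [InnerProductSpace ℝ E] {u v w x y : E} {θ : ℝ}

theorem volume_setOf_inner_greatCircle_mul_neg_inter_Ioc (hw : ⟪w, u⟫ ≠ 0) (v : E) (hθ : 0 ≤ θ)
    (hθπ : θ ≤ π) :
    volume ({t | ⟪w, greatCircle u v t⟫ * ⟪w, greatCircle u v (t + θ)⟫ < 0} ∩ Set.Ioc 0 π) =
      ENNReal.ofReal θ := by
  obtain ⟨r, hr, φ, hφ⟩ := exists_pos_forall_inner_greatCircle_eq hw v
  rw [← volume_setOf_cos_mul_cos_add_neg_inter_Ioc hθ hθπ (-φ),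
    ← measure_preimage_add_right volume φ]
  congr 1
  ext t
  simp [hφ, mul_mul_mul_neg_iff_of_pos hr hr, add_right_comm t φ θ, neg_lt_iff_pos_add,
    ← sub_eq_neg_add, le_sub_iff_add_le]

variable [MeasurableSpace E] [BorelSpace E] [FiniteDimensional ℝ E] {ν : Measure E}

theorem IsRotationInvariant.measure_setOf_inner_greatCircle_mul_neg (hν : IsRotationInvariant ν)
    (hu : ‖u‖ = 1) (hv : ‖v‖ = 1) (huv : ⟪u, v⟫ = 0) (t θ : ℝ) :
    ν {w | ⟪w, greatCircle u v t⟫ * ⟪w, greatCircle u v (t + θ)⟫ < 0} =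
      ν {w | ⟪w, u⟫ * ⟪w, greatCircle u v θ⟫ < 0} := by
  obtain ⟨R, hdet, hR⟩ := exists_rotation_greatCircle hu hv huv t
  rw [← hν.measure_preimage hdet (isOpen_lt (by fun_prop) continuous_const).measurableSet]
  congr 1
  ext w
  have hRu : R u = greatCircle u v t := by simpa using hR 0
  rw [Set.mem_preimage, Set.mem_ofPred_eq, Set.mem_ofPred_eq, add_comm t θ, ← hR, ← hRu,
    R.inner_map_map, R.inner_map_map]

theorem IsRotationInvariant.pi_mul_measure_setOf_inner_mul_inner_greatCircle_neg [SFinite ν]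
    (hν : IsRotationInvariant ν) (hE : 1 < Module.finrank ℝ E) (hν₀ : ν {0} = 0)
    (hu : ‖u‖ = 1) (hv : ‖v‖ = 1) (huv : ⟪u, v⟫ = 0) (hθ : 0 ≤ θ) (hθπ : θ ≤ π) :
    ENNReal.ofReal π * ν {w | ⟪w, u⟫ * ⟪w, greatCircle u v θ⟫ < 0} =
      ENNReal.ofReal θ * ν Set.univ := by
  let A : Set (ℝ × E) :=
    {p | ⟪p.2, greatCircle u v p.1⟫ * ⟪p.2, greatCircle u v (p.1 + θ)⟫ < 0}
  have hA : MeasurableSet A := (isOpen_lt (by fun_prop) continuous_const).measurableSet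
  have hu₀ : u ≠ 0 := norm_ne_zero_iff.1 (hu ▸ one_ne_zero)
  have hae : ∀ᵐ w ∂ν, ⟪w, u⟫ ≠ 0 := by
    simpa [ae_iff] using hν.measure_setOf_inner_eq_zero hE hν₀ hu₀
  have hfibre : ∀ᵐ w ∂ν, volume.restrict (Set.Ioc 0 π) ((·, w) ⁻¹' A) = ENNReal.ofReal θ := by
    filter_upwards [hae] with w hw
    rw [Measure.restrict_apply (measurable_prodMk_right hA)]
    exact volume_setOf_inner_greatCircle_mul_neg_inter_Ioc hw v hθ hθπ
  calc ENNReal.ofReal π * ν {w | ⟪w, u⟫ * ⟪w, greatCircle u v θ⟫ < 0}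
      = ∫⁻ t in Set.Ioc 0 π, ν (Prod.mk t ⁻¹' A) := by
        simp [A, hν.measure_setOf_inner_greatCircle_mul_neg hu hv huv, mul_comm]
    _ = ∫⁻ w, volume.restrict (Set.Ioc 0 π) ((·, w) ⁻¹' A) ∂ν := by
        rw [← Measure.prod_apply hA, Measure.prod_apply_symm hA]
    _ = ENNReal.ofReal θ * ν Set.univ := by rw [lintegral_congr_ae hfibre, lintegral_const]

theorem IsRotationInvariant.measure_setOf_inner_mul_inner_neg [SFinite ν]
    (hν : IsRotationInvariant ν) (hE : 1 < Module.finrank ℝ E) (hν₀ : ν {0} = 0)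
    (hx : x ≠ 0) (hy : y ≠ 0) :
    ν {w | ⟪w, x⟫ * ⟪w, y⟫ < 0} = ENNReal.ofReal (angle x y / π) * ν Set.univ := by
  have hx_inv := inv_pos.2 (norm_pos_iff.2 hx)
  have hy_inv := inv_pos.2 (norm_pos_iff.2 hy)
  have hx_unit : ‖‖x‖⁻¹ • x‖ = 1 := norm_smul_inv_norm hx
  have hy_unit : ‖‖y‖⁻¹ • y‖ = 1 := norm_smul_inv_norm hy
  obtain ⟨v, hv, hxv, hvy⟩ := exists_greatCircle_angle_eq hE hx_unit hy_unit
  have hsign (w : E) : ⟪w, ‖x‖⁻¹ • x⟫ * ⟪w, ‖y‖⁻¹ • y⟫ < 0 ↔ ⟪w, x⟫ * ⟪w, y⟫ < 0 := by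
    rw [real_inner_smul_right, real_inner_smul_right, mul_mul_mul_neg_iff_of_pos hx_inv hy_inv]
  have hmul := hν.pi_mul_measure_setOf_inner_mul_inner_greatCircle_neg hE hν₀ hx_unit hv hxv
    (angle_nonneg (‖x‖⁻¹ • x) (‖y‖⁻¹ • y)) (angle_le_pi _ _)
  rw [hvy, angle_smul_left_of_pos _ _ hx_inv, angle_smul_right_of_pos _ _ hy_inv] at hmul
  simp only [hsign] at hmul
  rw [ENNReal.ofReal_div_of_pos pi_pos, ← ENNReal.mul_div_right_comm, ← hmul, mul_comm,
    ENNReal.mul_div_cancel_right (by simp [pi_pos]) ENNReal.ofReal_ne_top]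

end SignDisagreement

section SpecialOrthogonalGroup

variable {d : ℕ}

theorem rot_eq_toEuclideanCLM (R : SOd d) : rot R = Matrix.toEuclideanCLM (𝕜 := ℝ) R.1 :=
  rfl

theorem rot_one (x : EuclideanSpace ℝ (Fin d)) : rot 1 x = x := by
  simp [rot_eq_toEuclideanCLM]

theorem rot_mul (R S : SOd d) (x : EuclideanSpace ℝ (Fin d)) : rot (R * S) x = rot R (rot S x) := by
  simp [rot_eq_toEuclideanCLM]

theorem rot_ne_zero (R : SOd d) {x : EuclideanSpace ℝ (Fin d)} (hx : x ≠ 0) : rot R x ≠ 0 := by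
  intro h
  apply hx
  rw [← rot_one x, ← inv_mul_cancel R, rot_mul, h, rot_eq_toEuclideanCLM, map_zero]

theorem inner_rot_left (R : SOd d) (x y : EuclideanSpace ℝ (Fin d)) :
    ⟪rot R x, y⟫ = ⟪x, rot R⁻¹ y⟫ := by
  have hinv : (R⁻¹).1 = R.1.transpose := rfl
  rw [real_inner_comm, rot_eq_toEuclideanCLM, rot_eq_toEuclideanCLM, Matrix.inner_toEuclideanCLM,
    Matrix.inner_toEuclideanCLM, hinv, Matrix.mulVec_transpose, dotProduct_comm x.ofLp,
    Matrix.dotProduct_mulVec]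

theorem exists_rot_eq {T : EuclideanSpace ℝ (Fin d) ≃ₗᵢ[ℝ] EuclideanSpace ℝ (Fin d)}
    (hT : LinearMap.det T.toLinearMap = 1) : ∃ S : SOd d, rot S = T := by
  let b := EuclideanSpace.basisFun (Fin d) ℝ
  let A := LinearMap.toMatrix b.toBasis b.toBasis T.toLinearMap
  have hA : A ∈ Matrix.orthogonalGroup (Fin d) ℝ := by
    convert b.toMatrix_orthonormalBasis_mem_orthogonal (b.map T) using 1
    ext i j
    simp [A, b, LinearMap.toMatrix_apply, Module.Basis.toMatrix_apply]
  have hdet : A.det = 1 := by rw [LinearMap.det_toMatrix, hT]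
  refine ⟨⟨A, Matrix.mem_specialOrthogonalGroup_iff.2 ⟨hA, hdet⟩⟩, funext fun x => ?_⟩
  exact congrArg (· x) (Matrix.toLin_toMatrix b.toBasis b.toBasis T.toLinearMap)

theorem measurable_specialOrthogonal_entry (i j : Fin d) : Measurable fun R : SOd d => R.1 i j :=
  (measurable_pi_apply j).comp ((measurable_pi_apply i).comp measurable_subtype_coe)

theorem measurable_specialOrthogonal_mul_const (S : SOd d) : Measurable fun R : SOd d => R * S := by
  refine Measurable.subtype_mk (measurable_pi_lambda _ fun i => measurable_pi_lambda _ fun j => ?_)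
  simp only [Matrix.mul_apply]
  exact Finset.measurable_sum _ fun k _ => (measurable_specialOrthogonal_entry i k).mul_const _

theorem measurable_rot_inv (x : EuclideanSpace ℝ (Fin d)) :
    Measurable fun R : SOd d => rot R⁻¹ x := by
  refine (WithLp.measurable_toLp 2 _).comp (measurable_pi_lambda _ fun i => ?_)
  exact Finset.measurable_sum Finset.univ fun j _ =>
    (measurable_specialOrthogonal_entry j i).mul_const (x j)

theorem isRotationInvariant_map_rot_inv {μ : Measure (SOd d)}
    (hμ : ∀ S : SOd d, μ.map (fun R => R * S) = μ) (x : EuclideanSpace ℝ (Fin d)) :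
    IsRotationInvariant (μ.map fun R => rot R⁻¹ x) := by
  intro T hT
  obtain ⟨S, hS⟩ := exists_rot_eq hT
  have hcomp : (T ∘ fun R : SOd d => rot R⁻¹ x) = (fun R => rot R⁻¹ x) ∘ fun R => R * S⁻¹ := by
    ext1 R
    simp [← hS, rot_mul]
  rw [Measure.map_map T.continuous.measurable (measurable_rot_inv x), hcomp,
    ← Measure.map_map (measurable_rot_inv x) (measurable_specialOrthogonal_mul_const _), hμ]

theorem lastCoord_eq_inner (hd : 0 < d) (x : EuclideanSpace ℝ (Fin d)) :
    lastCoord x = ⟪x, EuclideanSpace.single ⟨d - 1, Nat.sub_lt hd Nat.one_pos⟩ 1⟫ := by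
  simp [lastCoord, hd, EuclideanSpace.inner_single_right]

theorem haar_measure_sign_disagreement_general (hd : 2 ≤ d) (μ : Measure (SOd d))
    [IsProbabilityMeasure μ] (hμ : ∀ S : SOd d, μ.map (fun R => R * S) = μ)
    {x y e : EuclideanSpace ℝ (Fin d)} (hx : x ≠ 0) (hy : y ≠ 0) (he : e ≠ 0) :
    μ {R : SOd d | ⟪rot R x, e⟫ * ⟪rot R y, e⟫ < 0} = ENNReal.ofReal (angle x y / π) := by
  have hmeas := measurable_rot_inv e
  have hdim : 1 < Module.finrank ℝ (EuclideanSpace ℝ (Fin d)) := by rwa [finrank_euclideanSpace_fin]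
  have hzero : μ.map (fun R => rot R⁻¹ e) {0} = 0 := by
    rw [Measure.map_apply hmeas (measurableSet_singleton 0)]
    simp [Set.preimage, rot_ne_zero _ he]
  have hν := (isRotationInvariant_map_rot_inv hμ e).measure_setOf_inner_mul_inner_neg hdim hzero
    hx hy
  rw [Measure.map_apply hmeas (isOpen_lt (by fun_prop) continuous_const).measurableSet,
    Measure.map_apply hmeas .univ] at hν
  simpa [inner_rot_left, real_inner_comm (rot _⁻¹ e)] using hν

end SpecialOrthogonalGroup

/-!
STATEMENT 9 (claim (claim:meas) in the proof of Lemma 3.2): the Haar measure of the set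
of rotations under which the signs of the last coordinates of Rn and Rm disagree equals
arccos⟪n,m⟫/π.
-/

theorem haar_measure_sign_disagreement
    (d : ℕ) (hd : 2 ≤ d)
    (μ : Measure (SOd d)) [IsProbabilityMeasure μ]
    (hμleft : ∀ R₀ : SOd d, μ.map (fun R => R₀ * R) = μ)
    (hμright : ∀ R₀ : SOd d, μ.map (fun R => R * R₀) = μ)
    (n m : EuclideanSpace ℝ (Fin d)) (hn : ‖n‖ = 1) (hm : ‖m‖ = 1) :
    μ {R : SOd d | lastCoord (rot R n) * lastCoord (rot R m) < 0} =
      ENNReal.ofReal (Real.arccos ⟪n, m⟫ / π) := by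
  have hn₀ : n ≠ 0 := norm_ne_zero_iff.1 (hn ▸ one_ne_zero)
  have hm₀ : m ≠ 0 := norm_ne_zero_iff.1 (hm ▸ one_ne_zero)
  simpa [lastCoord_eq_inner (zero_lt_two.trans_le hd), angle, hn, hm] using
    haar_measure_sign_disagreement_general hd μ hμright hn₀ hm₀
      (e := EuclideanSpace.single ⟨d - 1, by omega⟩ 1) (by simp)
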